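/- Let s ∈ ℝ and let q, r be such that both (s,q) and (s,r) are admissible slope–constraint pairs. If (ρ_l, ρ_r) ∈ G_s(q) and (σ_l, σ_r) ∈ G_s(r), then Φ_s(ρ_r, σ_r) − Φ_s(ρ_l, σ_l) ≤ 2|q − r|. -/

import Mathlib

/-!
Both one-sided fluxes of a germ pair agree, say `F_s(ρl) = F_s(ρr) = A` and
`F_s(σl) = F_s(σr) = B`, with `A ≤ q` and `B ≤ r`. The quantity to bound is
`(sgn(ρr - σr) - sgn(ρl - σl)) (A - B)`. By symmetry take `B < A`; it is positive only when
`ρl < σl` and `σr < ρr`. If moreover `σl ≤ σr`, then `σl ∈ [ρl, ρr]` and concavity of `F_s` gives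
`B ≥ A`, a contradiction. So `σr < σl`: the pair `(σl, σr)` is the nonclassical one, hence `B = r`,
and the quantity is at most `2 (A - B) ≤ 2 (q - r)`.
-/

open MeasureTheory Set Filter Topology

noncomputable section

/-- The normal flux `F_s(ρ) = f(ρ) - s·ρ` through the line of slope `s`. -/
def Flx (f : ℝ → ℝ) (s ρ : ℝ) : ℝ := f ρ - s * ρ

/-- The Kruzhkov entropy flux `Φ_s(a,b) = sgn(a-b)(F_s(a) - F_s(b))`. -/
def EFlx (f : ℝ → ℝ) (s a b : ℝ) : ℝ := Real.sign (a - b) * (Flx f s a - Flx f s b)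

/-- `f` is a bell-shaped flux with critical density `ρb`:
`f` is `C²` on `[0,1]`, vanishes at `0` and `1`, is concave on `[0,1]`, and its
derivative has the sign of `ρb - ρ` a.e. on `(0,1)`. -/
structure BellShaped (f : ℝ → ℝ) (ρb : ℝ) : Prop where
  smooth : ContDiffOn ℝ 2 f (Icc 0 1)
  zero_at_zero : f 0 = 0
  zero_at_one : f 1 = 0
  concave : ConcaveOn ℝ (Icc 0 1) f
  crit_mem : ρb ∈ Ioo (0:ℝ) 1
  deriv_sign : ∀ᵐ ρ ∂(volume.restrict (Ioo (0:ℝ) 1)),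
    0 < derivWithin f (Icc 0 1) ρ * (ρb - ρ)

/-- `max_{[0,1]} F_s`. -/
def maxFlx (f : ℝ → ℝ) (s : ℝ) : ℝ := sSup (Flx f s '' Icc 0 1)

/-- Admissible slope–constraint pair `(s,q)`. -/
def AdmissiblePair (f : ℝ → ℝ) (s q : ℝ) : Prop :=
  (0 ≤ s ∧ 0 ≤ q ∧ q < maxFlx f s) ∨ (s < 0 ∧ -s ≤ q ∧ q < maxFlx f s)

/-- The admissibility germ `G_s(q) = G¹ ∪ G² ∪ G³`. -/
def Germ (f : ℝ → ℝ) (s q : ℝ) : Set (ℝ × ℝ) :=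
  {p | p.1 ∈ Icc (0:ℝ) 1 ∧ p.2 ∈ Icc (0:ℝ) 1 ∧
    ((p.2 < p.1 ∧ Flx f s p.1 = q ∧ Flx f s p.2 = q) ∨
     (p.1 = p.2 ∧ Flx f s p.1 ≤ q) ∨
     (p.1 < p.2 ∧ Flx f s p.1 = Flx f s p.2 ∧ Flx f s p.1 ≤ q))}

/-- The constraint remainder `ℛ_s(κ,q) = 2(F_s(κ) - min{F_s(κ), q})`. -/
def Rem (f : ℝ → ℝ) (s κ q : ℝ) : ℝ := 2 * (Flx f s κ - min (Flx f s κ) q)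

lemma flx_concaveOn {f : ℝ → ℝ} (hf : ConcaveOn ℝ (Icc 0 1) f) (s : ℝ) :
    ConcaveOn ℝ (Icc 0 1) (Flx f s) := by
  refine ⟨hf.1, fun x hx y hy a b ha hb hab => ?_⟩
  have h := hf.2 hx hy ha hb hab
  simp only [Flx, smul_eq_mul] at h ⊢
  linarith

lemma eFlx_comm (f : ℝ → ℝ) (s a b : ℝ) : EFlx f s a b = EFlx f s b a := by
  unfold EFlx
  rw [← neg_sub b a, Real.sign_neg]
  ring

lemma germ_flx_eq {f : ℝ → ℝ} {s q a b : ℝ} (h : (a, b) ∈ Germ f s q) :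
    Flx f s a = Flx f s b := by
  obtain ⟨-, -, ⟨-, h1, h2⟩ | ⟨h, -⟩ | ⟨-, h, -⟩⟩ := h
  · exact h1.trans h2.symm
  · exact congrArg _ h
  · exact h

lemma germ_flx_le {f : ℝ → ℝ} {s q a b : ℝ} (h : (a, b) ∈ Germ f s q) : Flx f s a ≤ q := by
  obtain ⟨-, -, ⟨-, h, -⟩ | ⟨-, h⟩ | ⟨-, -, h⟩⟩ := h
  · exact h.le
  · exact h
  · exact h

/-- A decreasing germ pair is the nonclassical shock, so it saturates the constraint. -/
lemma germ_flx_eq_of_lt {f : ℝ → ℝ} {s q a b : ℝ} (h : (a, b) ∈ Germ f s q) (hlt : b < a) :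
    Flx f s a = q := by
  obtain ⟨-, -, ⟨-, h, -⟩ | ⟨h, -⟩ | ⟨h, -⟩⟩ := h
  · exact h
  · exact absurd h hlt.ne'
  · exact absurd h hlt.asymm

/-- The estimate when the first pair carries the larger flux. -/
lemma eFlx_sub_le_of_lt {f : ℝ → ℝ} {s q r ρl ρr σl σr : ℝ}
    (hf : ConcaveOn ℝ (Icc 0 1) f)
    (hρ : (ρl, ρr) ∈ Germ f s q) (hσ : (σl, σr) ∈ Germ f s r)
    (hlt : Flx f s σl < Flx f s ρl) :
    EFlx f s ρr σr - EFlx f s ρl σl ≤ 2 * |q - r| := by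
  have hA := germ_flx_eq hρ
  have hB := germ_flx_eq hσ
  have hq := germ_flx_le hρ
  have habs := abs_nonneg (q - r)
  have hle := le_abs_self (q - r)
  have hl : ρl ≠ σl := fun h => hlt.ne' (congrArg _ h)
  have hr : ρr ≠ σr := fun h => hlt.ne' (by rw [hA, hB, h])
  unfold EFlx
  rw [← hA, ← hB]
  rcases hl.lt_or_gt with hl | hl <;> rcases hr.lt_or_gt with hr | hr
  · rw [Real.sign_of_neg (sub_neg.2 hl), Real.sign_of_neg (sub_neg.2 hr)]
    linarith
  · have hσlt : σr < σl := by
      by_contra! hc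
      have h := (flx_concaveOn hf s).min_le_of_mem_Icc hρ.1 hρ.2.1
        ⟨hl.le, hc.trans hr.le⟩
      rw [← hA, min_self] at h
      exact absurd hlt h.not_gt
    have hBr := germ_flx_eq_of_lt hσ hσlt
    rw [Real.sign_of_neg (sub_neg.2 hl), Real.sign_of_pos (sub_pos.2 hr)]
    linarith
  · rw [Real.sign_of_pos (sub_pos.2 hl), Real.sign_of_neg (sub_neg.2 hr)]
    linarith
  · rw [Real.sign_of_pos (sub_pos.2 hl), Real.sign_of_pos (sub_pos.2 hr)]
    linarith

/-- cross-germ dissipativity estimate: for `(ρl,ρr) ∈ G_s(q)` and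
`(σl,σr) ∈ G_s(r)`, `Φ_s(ρr,σr) - Φ_s(ρl,σl) ≤ 2|q - r|`. -/
theorem germ_cross_dissipativity
    (f : ℝ → ℝ) (ρb : ℝ) (hf : BellShaped f ρb)
    (s q r : ℝ) (hq : AdmissiblePair f s q) (hr : AdmissiblePair f s r)
    (ρl ρr σl σr : ℝ)
    (hρ : (ρl, ρr) ∈ Germ f s q) (hσ : (σl, σr) ∈ Germ f s r) :
    EFlx f s ρr σr - EFlx f s ρl σl ≤ 2 * |q - r| := by
  rcases lt_trichotomy (Flx f s σl) (Flx f s ρl) with h | h | h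
  · exact eFlx_sub_le_of_lt hf.concave hρ hσ h
  · have hl : EFlx f s ρl σl = 0 := by simp [EFlx, h]
    have hr : EFlx f s ρr σr = 0 := by
      simp [EFlx, ← germ_flx_eq hρ, ← germ_flx_eq hσ, h]
    rw [hl, hr]
    simp
  · rw [eFlx_comm f s ρr, eFlx_comm f s ρl, abs_sub_comm]
    exact eFlx_sub_le_of_lt hf.concave hσ hρ h
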